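/- arXiv:2501.13143 — 2 statements merged into one kernel-verified Lean document; each statement's English description precedes it below -/
import Mathlib

section
/- Let k ≥ 2 and let φ : ℝ → ℝ be continuous. Define the second-order expected utility (SOEU) functional with uniform probability on {1,…,k} by U(y) = (1/k)∑_{i=1}^k φ(y_i) for y ∈ ℝ^k. Then U is ambiguity averse if and only if φ is concave. -/
/-- Ambiguity aversion for a functional on utility profiles over the states {1,…,k}. -/
def AmbiguityAverse {k : ℕ} (U : (Fin k → ℝ) → ℝ) : Prop :=
  ∀ (E : Finset (Fin k)) (ω₁ ω₂ : Fin k) (u₁ u₂ ub : ℝ) (y : Fin k → ℝ),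
    ω₁ ∉ E → ω₂ ∉ E → ω₁ ≠ ω₂ →
    u₁ < u₂ → 0 < ub → 2 * ub < u₂ - u₁ →
    y ω₁ = u₁ → y ω₂ = u₂ →
    (∀ ω ∈ E, y ω < u₁ - ub) →
    (∀ ω, ω ∉ E → ω ≠ ω₁ → ω ≠ ω₂ → u₂ + ub < y ω) →
    U (Function.update (Function.update y ω₁ (u₁ + ub)) ω₂ (u₂ - ub)) ≥
      U (Function.update (Function.update y ω₁ (u₁ - ub)) ω₂ (u₂ + ub))

/-- Ambiguity prudence for a functional on utility profiles over the states {1,…,k}. -/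
def AmbiguityPrudent {k : ℕ} (U : (Fin k → ℝ) → ℝ) : Prop :=
  ∀ (E : Finset (Fin k)) (ω₁ ω₂ ω₃ : Fin k) (u₁ u₂ u₃ ub : ℝ) (y : Fin k → ℝ),
    ω₁ ∉ E → ω₂ ∉ E → ω₃ ∉ E →
    ω₁ ≠ ω₂ → ω₁ ≠ ω₃ → ω₂ ≠ ω₃ →
    u₁ < u₂ → u₂ < u₃ → u₂ - u₁ = u₃ - u₂ →
    0 < ub → 3 * ub < u₂ - u₁ →
    y ω₁ = u₁ → y ω₂ = u₂ → y ω₃ = u₃ →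
    (∀ ω ∈ E, y ω < u₁ - ub) →
    (∀ ω, ω ∉ E → ω ≠ ω₁ → ω ≠ ω₂ → ω ≠ ω₃ → u₃ + ub < y ω) →
    U (Function.update (Function.update (Function.update y ω₁ (u₁ + ub)) ω₂ (u₂ - 2 * ub)) ω₃ (u₃ + ub)) ≥
      U (Function.update (Function.update (Function.update y ω₁ (u₁ - ub)) ω₂ (u₂ + 2 * ub)) ω₃ (u₃ - ub))

/-!
Since `U` is additive across states, changing `y` at `ω₁` and `ω₂` affects only their two terms.
Ambiguity aversion therefore says exactly that `φ` disprefers strict mean-preserving spreads of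
two-point lotteries; to see that every such spread is tested, take `E = ∅` and give the remaining
states utilities above those of `ω₁` and `ω₂`. Letting the inner pair collapse to its mean yields
midpoint concavity, and upper semicontinuity of `φ` suffices for this limit. The hypograph of `φ`
is then closed and stable under midpoints, hence convex.
-/

open Set Topology

theorem ordConnected_of_isClosed_of_inter_Ioo_nonempty {α : Type*} [LinearOrder α]
    [TopologicalSpace α] [OrderClosedTopology α] [CompactIccSpace α] {s : Set α}
    (hs : IsClosed s) (hdense : ∀ a ∈ s, ∀ b ∈ s, a < b → (s ∩ Ioo a b).Nonempty) :
    s.OrdConnected := by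
  refine ⟨fun x hx y hy t ht => ?_⟩
  by_contra hts
  obtain ⟨a, ⟨has, hat⟩, ha⟩ :=
    (isCompact_Icc.inter_left hs).exists_isGreatest ⟨x, hx, left_mem_Icc.2 ht.1⟩
  obtain ⟨b, ⟨hbs, htb⟩, hb⟩ :=
    (isCompact_Icc.inter_left hs).exists_isLeast ⟨y, hy, right_mem_Icc.2 ht.2⟩
  have hab : a < b :=
    (hat.2.lt_of_ne (ne_of_mem_of_not_mem has hts)).trans_le htb.1
  obtain ⟨c, hcs, hac, hcb⟩ := hdense a has b hbs hab
  rcases le_total c t with hct | htc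
  · exact hac.not_ge (ha ⟨hcs, hat.1.trans hac.le, hct⟩)
  · exact hcb.not_ge (hb ⟨hcs, htc, hcb.le.trans htb.2⟩)

theorem convex_of_isClosed_of_inter_openSegment_nonempty {E : Type*} [AddCommGroup E] [Module ℝ E]
    [TopologicalSpace E] [IsTopologicalAddGroup E] [ContinuousSMul ℝ E] {s : Set E}
    (hs : IsClosed s) (hseg : ∀ x ∈ s, ∀ y ∈ s, (s ∩ openSegment ℝ x y).Nonempty) :
    Convex ℝ s := by
  refine convex_iff_segment_subset.2 fun x hx y hy => ?_
  let line : ℝ →ᵃ[ℝ] E := AffineMap.lineMap x y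
  have hclosed : IsClosed (line ⁻¹' s) := hs.preimage AffineMap.lineMap_continuous
  have hconn : (line ⁻¹' s).OrdConnected := by
    refine ordConnected_of_isClosed_of_inter_Ioo_nonempty hclosed fun a ha b hb hab => ?_
    obtain ⟨_, hps, hp⟩ := hseg (line a) ha (line b) hb
    rw [← image_openSegment, openSegment_eq_Ioo hab] at hp
    obtain ⟨c, hc, rfl⟩ := hp
    exact ⟨c, hps, hc⟩
  rw [segment_eq_image_lineMap, image_subset_iff]
  exact hconn.out (by simpa [line] using hx) (by simpa [line] using hy)

theorem concaveOn_of_upperSemicontinuousOn_of_midpoint {E : Type*} [AddCommGroup E] [Module ℝ E]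
    [TopologicalSpace E] [IsTopologicalAddGroup E] [ContinuousSMul ℝ E] {s : Set E} {f : E → ℝ}
    (hconv : Convex ℝ s) (hs : IsClosed s) (hf : UpperSemicontinuousOn f s)
    (hmid : ∀ x ∈ s, ∀ y ∈ s, midpoint ℝ (f x) (f y) ≤ f (midpoint ℝ x y)) :
    ConcaveOn ℝ s f := by
  refine concaveOn_of_convex_hypograph <| convex_of_isClosed_of_inter_openSegment_nonempty
    ((upperSemicontinuousOn_iff_isClosed_hypograph hs).1 hf) ?_
  rintro ⟨x, p⟩ ⟨hx, hp⟩ ⟨y, q⟩ ⟨hy, hq⟩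
  refine ⟨midpoint ℝ (x, p) (y, q), ?_, midpoint_mem_openSegment _ _⟩
  simp only [midpoint, mem_ofPred_eq, AffineMap.fst_lineMap, AffineMap.snd_lineMap]
  exact ⟨hconv.midpoint_mem hx hy, (midpoint_le_midpoint hp hq).trans (hmid x hx y hy)⟩

theorem add_le_add_of_concaveOn_of_mem_segment {𝕜 E β : Type*} [Semiring 𝕜] [PartialOrder 𝕜]
    [AddCommGroup E] [Module 𝕜 E] [AddCommMonoid β] [PartialOrder β] [IsOrderedAddMonoid β]
    [Module 𝕜 β] {s : Set E} {f : E → β} (hf : ConcaveOn 𝕜 s f) {x y p : E} (hx : x ∈ s)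
    (hy : y ∈ s) (hp : p ∈ segment 𝕜 x y) : f x + f y ≤ f p + f (x + y - p) := by
  obtain ⟨a, b, ha, hb, hab, rfl⟩ := hp
  have hreflect : x + y - (a • x + b • y) = b • x + a • y := by
    rw [sub_eq_iff_eq_add]
    conv_lhs => rw [← Convex.combo_self hab x, ← Convex.combo_self hab y]
    abel
  calc
    f x + f y = (a • f x + b • f y) + (b • f x + a • f y) := by
      conv_lhs => rw [← Convex.combo_self hab (f x), ← Convex.combo_self hab (f y)]
      abel
    _ ≤ f (a • x + b • y) + f (x + y - (a • x + b • y)) := by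
      rw [hreflect]
      exact add_le_add (hf.2 hx hy ha hb hab) (hf.2 hx hy hb ha (by rw [add_comm, hab]))

/-- Aversion of `φ` to strict mean-preserving spreads of a two-point lottery with equal weights: the
inner pair `b < c` is preferred to any strictly wider pair `a < d` with the same sum. This is Wright
concavity with strict inequalities, so that `b = c` is excluded. -/
def SpreadAverse (φ : ℝ → ℝ) : Prop :=
  ∀ a b c d, a < b → b < c → c < d → a + d = b + c → φ a + φ d ≤ φ b + φ c

theorem spreadAverse_of_concaveOn {φ : ℝ → ℝ} (hφ : ConcaveOn ℝ univ φ) : SpreadAverse φ := by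
  intro a b c d hab hbc hcd hsum
  have hb : b ∈ segment ℝ a d := by
    rw [segment_eq_Icc (by linarith)]
    constructor <;> linarith
  have hc : a + d - b = c := by linarith
  simpa only [hc] using add_le_add_of_concaveOn_of_mem_segment hφ (mem_univ a) (mem_univ d) hb

theorem SpreadAverse.add_le_two_mul_midpoint {φ : ℝ → ℝ} (hspread : SpreadAverse φ)
    (hφ : UpperSemicontinuous φ) {x y : ℝ} (hxy : x < y) :
    φ x + φ y ≤ 2 * φ (midpoint ℝ x y) := by
  set m := midpoint ℝ x y with hm
  have hsum : x + y = m + m := by rw [hm, midpoint_add_self]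
  have husc : UpperSemicontinuous fun e => φ (m - e) + φ (m + e) :=
    (hφ.comp (by fun_prop : Continuous fun e => m - e)).add
      (hφ.comp (by fun_prop : Continuous fun e => m + e))
  have hinner : ∀ᶠ e in 𝓝[>] 0, φ x + φ y ≤ φ (m - e) + φ (m + e) := by
    filter_upwards [Ioo_mem_nhdsGT (show 0 < m - x by linarith)] with e ⟨he, hex⟩
    exact hspread x (m - e) (m + e) y (by linarith) (by linarith) (by linarith) (by linarith)
  have hlim : φ x + φ y ≤ φ (m - 0) + φ (m + 0) :=
    husc.frequently 0 _ (hinner.frequently.filter_mono nhdsWithin_le_nhds)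
  rwa [sub_zero, add_zero, ← two_mul] at hlim

theorem spreadAverse_iff_concaveOn {φ : ℝ → ℝ} (hφ : UpperSemicontinuous φ) :
    SpreadAverse φ ↔ ConcaveOn ℝ univ φ := by
  refine ⟨fun hspread => ?_, spreadAverse_of_concaveOn⟩
  refine concaveOn_of_upperSemicontinuousOn_of_midpoint convex_univ isClosed_univ
    (hφ.upperSemicontinuousOn univ) fun x _ y _ => ?_
  wlog hxy : x < y generalizing x y
  · rcases (not_lt.1 hxy).eq_or_lt with rfl | hyx
    · simp only [midpoint_self, le_refl]
    · simpa only [midpoint_comm] using this y trivial x trivial hyx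
  have hle := hspread.add_le_two_mul_midpoint hφ hxy
  rw [midpoint_eq_smul_add ℝ (φ x), invOf_eq_inv, smul_eq_mul]
  linarith

theorem sum_comp_update_update {ι β M : Type*} [Fintype ι] [DecidableEq ι] [AddCommMonoid M]
    (f : β → M) (y : ι → β) {i j : ι} (hij : i ≠ j) (a b : β) :
    ∑ l, f (Function.update (Function.update y i a) j b l) =
      f a + f b + ∑ l ∈ {i, j}ᶜ, f (y l) := by
  rw [← Finset.sum_add_sum_compl {i, j}, Finset.sum_pair hij, Function.update_self,
    Function.update_of_ne hij, Function.update_self]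
  congr 1
  refine Finset.sum_congr rfl fun l hl => ?_
  simp only [Finset.mem_compl, Finset.mem_insert, Finset.mem_singleton, not_or] at hl
  rw [Function.update_of_ne hl.2, Function.update_of_ne hl.1]

theorem mul_sum_comp_update_le_iff {ι β : Type*} [Fintype ι] [DecidableEq ι] {c : ℝ} (hc : 0 < c)
    (φ : β → ℝ) (y : ι → β) {i j : ι} (hij : i ≠ j) (a b a' b' : β) :
    c * ∑ l, φ (Function.update (Function.update y i a) j b l) ≤
        c * ∑ l, φ (Function.update (Function.update y i a') j b' l) ↔
      φ a + φ b ≤ φ a' + φ b' := by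
  rw [mul_le_mul_iff_right₀ hc, sum_comp_update_update φ y hij, sum_comp_update_update φ y hij,
    add_le_add_iff_right]

theorem ambiguityAverse_mul_sum_iff_spreadAverse {k : ℕ} (hk : 2 ≤ k) {c : ℝ} (hc : 0 < c)
    (φ : ℝ → ℝ) :
    AmbiguityAverse (fun y : Fin k → ℝ => c * ∑ i, φ (y i)) ↔ SpreadAverse φ := by
  constructor
  · intro hU p q r s hpq hqr hrs hsum
    have : Nontrivial (Fin k) := Fin.nontrivial_iff_two_le.2 hk
    obtain ⟨ω₁, ω₂, hω⟩ := exists_pair_ne (Fin k)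
    obtain ⟨u₁, ub, rfl, rfl⟩ : ∃ u₁ ub, u₁ - ub = p ∧ u₁ + ub = q :=
      ⟨(p + q) / 2, (q - p) / 2, by ring, by ring⟩
    obtain ⟨u₂, rfl⟩ : ∃ u₂, u₂ - ub = r := ⟨r + ub, by ring⟩
    obtain rfl : s = u₂ + ub := by linarith
    let y := Function.update (Function.update (fun _ => u₂ + ub + 1) ω₁ u₁) ω₂ u₂
    have hle := hU ∅ ω₁ ω₂ u₁ u₂ ub y (by simp) (by simp) hω (by linarith) (by linarith)
      (by linarith) (by simp [y, hω]) (by simp [y]) (by simp)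
      (fun ω _ h₁ h₂ => by simp [y, h₁, h₂])
    rwa [ge_iff_le, mul_sum_comp_update_le_iff hc φ y hω] at hle
  · intro hspread E ω₁ ω₂ u₁ u₂ ub y _ _ hω _ hub hlt _ _ _ _
    rw [ge_iff_le, mul_sum_comp_update_le_iff hc φ y hω]
    exact hspread _ _ _ _ (by linarith) (by linarith) (by linarith) (by ring)

theorem SOEU_ambiguityAverse_iff_concave_general {k : ℕ} (hk : 2 ≤ k) (φ : ℝ → ℝ)
    (hφ : UpperSemicontinuous φ) :
    AmbiguityAverse (fun y : Fin k → ℝ => (1 / (k : ℝ)) * ∑ i, φ (y i)) ↔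
      ConcaveOn ℝ univ φ := by
  have hweight : 0 < 1 / (k : ℝ) := one_div_pos.2 (Nat.cast_pos.2 (by omega))
  rw [ambiguityAverse_mul_sum_iff_spreadAverse hk hweight, spreadAverse_iff_concaveOn hφ]

/-- For k ≥ 2 and continuous φ : ℝ → ℝ, the SOEU functional
U(y) = (1/k)∑ᵢ φ(yᵢ) is ambiguity averse iff φ is concave. -/
theorem SOEU_ambiguityAverse_iff_concave
    {k : ℕ} (hk : 2 ≤ k)
    (φ : ℝ → ℝ) (hφ : Continuous φ) :
    AmbiguityAverse (fun y : Fin k → ℝ => (1 / (k : ℝ)) * ∑ i, φ (y i)) ↔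
    ConcaveOn ℝ Set.univ φ :=
  SOEU_ambiguityAverse_iff_concave_general hk φ hφ.upperSemicontinuous
end

section
/- Let k ≥ 3 and let φ : ℝ → ℝ be three times differentiable. Define the second-order expected utility (SOEU) functional with uniform probability on {1,…,k} by U(y) = (1/k)∑_{i=1}^k φ(y_i) for y ∈ ℝ^k. Then U is ambiguity prudent if and only if φ'''(t) ≥ 0 for all t ∈ ℝ. -/
/-! Write `Φ s = φ (m + s) - φ (m - s)`. On the three reshuffled states, prudence says that
`Φ (2h) + Φ (d - h) ≤ Φ (d + h)` with `m = u₂`, `d = u₂ - u₁`, `h = ū`; all other states cancel.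

If `φ'` is convex, then `Φ' s = φ' (m + s) + φ' (m - s)` is increasing on `[0, ∞)`, so `Φ` is convex
there. Since `Φ 0 = 0` and `0 + (d + h) = 2h + (d - h)`, convexity is the required inequality.

Conversely, both sides agree at `h = 0`, so their `h`-derivatives there compare:
`2 Φ' 0 ≤ 2 Φ' d`, i.e. `φ'` is midpoint convex. The increments `x ↦ φ (x + t) - φ x` inherit this,
are continuous and hence convex, and `φ'` is a pointwise limit of their multiples.
-/

open Filter Function Set Topology

section Convexity

theorem map_add_map_le_of_convexOn_of_mem_segment {𝕜 E β : Type*}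
    [Semiring 𝕜] [PartialOrder 𝕜] [AddCommGroup E] [Module 𝕜 E]
    [AddCommMonoid β] [PartialOrder β] [IsOrderedAddMonoid β] [Module 𝕜 β]
    {s : Set E} {f : E → β} (hf : ConvexOn 𝕜 s f) {a b x y : E} (ha : a ∈ s) (hb : b ∈ s)
    (hx : x ∈ segment 𝕜 a b) (hxy : x + y = a + b) : f x + f y ≤ f a + f b := by
  obtain ⟨p, q, hp, hq, hpq, rfl⟩ := hx
  have hy : y = q • a + p • b := by
    have hab : a + b = (p • a + q • b) + (q • a + p • b) := by
      calc a + b = (p + q) • a + (p + q) • b := by rw [hpq, one_smul, one_smul]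
        _ = (p • a + q • b) + (q • a + p • b) := by simp only [add_smul]; abel
    exact add_left_cancel (hxy.trans hab)
  calc f (p • a + q • b) + f y
      ≤ (p • f a + q • f b) + (q • f a + p • f b) := by
        rw [hy]
        exact add_le_add (hf.2 ha hb hp hq hpq) (hf.2 ha hb hq hp (by rwa [add_comm]))
    _ = (p + q) • f a + (p + q) • f b := by simp only [add_smul]; abel
    _ = f a + f b := by rw [hpq, one_smul, one_smul]

/-- Midpoint convexity (Jensen convexity), with the two points written as `x + d` and `x - d`. -/
def IsMidpointConvex {E : Type*} [AddCommGroup E] (f : E → ℝ) : Prop :=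
  ∀ x d, 2 * f x ≤ f (x + d) + f (x - d)

theorem IsMidpointConvex.nonpos_of_mem_Icc {g : ℝ → ℝ} (hmid : IsMidpointConvex g) {a b : ℝ}
    (hg : ContinuousOn g (Icc a b)) (ha : g a ≤ 0) (hb : g b ≤ 0) {t : ℝ}
    (ht : t ∈ Icc a b) : g t ≤ 0 := by
  obtain ⟨z, hz, hmax⟩ := isCompact_Icc.exists_isMaxOn ⟨t, ht⟩ hg
  refine (hmax ht).trans (le_of_not_gt fun hpos => ?_)
  -- At the leftmost maximizer `c`, points to its left have strictly smaller value.
  obtain ⟨c, ⟨hc, hcz⟩, hleast⟩ :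
      ∃ c, IsLeast (Icc a b ∩ g ⁻¹' {g z}) c :=
    (isCompact_Icc.of_isClosed_subset (hg.preimage_isClosed_of_isClosed isClosed_Icc
      isClosed_singleton) inter_subset_left).exists_isLeast ⟨z, hz, rfl⟩
  rw [mem_preimage, mem_singleton_iff] at hcz
  have hac : a < c := hc.1.lt_of_ne (by rintro rfl; linarith)
  have hcb : c < b := hc.2.lt_of_ne (by rintro rfl; linarith)
  obtain ⟨r, hr, hrmin⟩ := exists_between (lt_min (sub_pos.2 hac) (sub_pos.2 hcb))
  obtain ⟨hra, hrb⟩ := lt_min_iff.1 hrmin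
  have hleft : c - r ∈ Icc a b := ⟨by linarith, by linarith⟩
  have hright : c + r ∈ Icc a b := ⟨by linarith, by linarith⟩
  have hleft_lt : g (c - r) < g z :=
    (hmax hleft).lt_of_ne fun h => by linarith [hleast ⟨hleft, h⟩]
  have hright_le : g (c + r) ≤ g z := hmax hright
  linarith [hmid c r]

theorem IsMidpointConvex.convexOn_univ {E : Type*} [AddCommGroup E] [Module ℝ E]
    [TopologicalSpace E] [ContinuousAdd E] [ContinuousSMul ℝ E] {f : E → ℝ}
    (hmid : IsMidpointConvex f) (hf : Continuous f) : ConvexOn ℝ univ f := by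
  refine ⟨convex_univ, fun x _ y _ p q hp hq hpq => ?_⟩
  let excess : ℝ → ℝ := fun t => f (x + t • (y - x)) - (f x + t * (f y - f x))
  have hexcess_mid : IsMidpointConvex excess := fun t d => by
    have := hmid (x + t • (y - x)) (d • (y - x))
    rw [add_assoc, ← add_smul, add_sub_assoc, ← sub_smul] at this
    simp only [excess]
    linarith
  have hexcess_nonpos : excess q ≤ 0 :=
    hexcess_mid.nonpos_of_mem_Icc (a := 0) (b := 1) (by fun_prop) (by simp [excess])
      (by simp [excess]) ⟨hq, by linarith⟩
  obtain rfl : p = 1 - q := by linarith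
  have hcomb : (1 - q) • x + q • y = x + q • (y - x) := by module
  rw [hcomb, smul_eq_mul, smul_eq_mul]
  linarith

theorem isMidpointConvex_increment {φ : ℝ → ℝ} (hφ : Differentiable ℝ φ)
    (hmid : IsMidpointConvex (deriv φ)) {t : ℝ} (ht : 0 ≤ t) :
    IsMidpointConvex fun x => φ (x + t) - φ x := by
  intro x d
  change 2 * (φ (x + t) - φ x) ≤ (φ (x + d + t) - φ (x + d)) + (φ (x - d + t) - φ (x - d))
  have hshift (a s : ℝ) : HasDerivAt (fun s => φ (a + s)) (deriv φ (a + s)) s :=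
    (hφ (a + s)).hasDerivAt.comp_const_add a s
  let u : ℝ → ℝ := fun s => φ (x + d + s) + φ (x - d + s) - 2 * φ (x + s)
  have hu (s : ℝ) : HasDerivAt u
      (deriv φ (x + d + s) + deriv φ (x - d + s) - 2 * deriv φ (x + s)) s :=
    ((hshift _ s).add (hshift _ s)).sub ((hshift _ s).const_mul 2)
  have hu_mono : Monotone u := monotone_of_hasDerivAt_nonneg hu fun s => by
    have := hmid (x + s) d
    rw [add_right_comm, add_sub_right_comm] at this
    exact sub_nonneg.2 this
  have := hu_mono ht
  simp only [u, add_zero] at this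
  linarith

theorem convexOn_univ_deriv_of_isMidpointConvex {φ : ℝ → ℝ} (hφ : Differentiable ℝ φ)
    (hmid : IsMidpointConvex (deriv φ)) : ConvexOn ℝ univ (deriv φ) := by
  have hslope_convex (t : ℝ) (ht : 0 < t) :
      ConvexOn ℝ univ fun x => t⁻¹ • (φ (x + t) - φ x) := by
    have hcont : Continuous fun x => φ (x + t) - φ x :=
      (hφ.continuous.comp (continuous_add_const t)).sub hφ.continuous
    exact ((isMidpointConvex_increment hφ hmid ht.le).convexOn_univ hcont).smul
      (inv_nonneg.2 ht.le)
  have hlim : Tendsto (fun t x => t⁻¹ • (φ (x + t) - φ x)) (𝓝[>] 0) (𝓝 (deriv φ)) :=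
    tendsto_pi_nhds.2 fun x => (hφ x).hasDerivAt.tendsto_slope_zero_right
  exact isClosed_setOfPred_convexOn.mem_of_tendsto hlim
    (eventually_mem_nhdsWithin.mono hslope_convex)

theorem convexOn_univ_iff_deriv2_nonneg {f : ℝ → ℝ} (hf : Differentiable ℝ f)
    (hf' : Differentiable ℝ (deriv f)) :
    ConvexOn ℝ univ f ↔ ∀ x, 0 ≤ deriv (deriv f) x := by
  refine ⟨fun hconv x => ?_, fun h => convexOn_univ_of_deriv2_nonneg hf hf' h⟩
  have hmono : Monotone (deriv f) := monotoneOn_univ.1 (hconv.monotoneOn_deriv fun x _ => hf x)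
  exact hmono.deriv_nonneg

end Convexity

theorem nonneg_of_hasDerivWithinAt_Ioi_of_eventually_le {f : ℝ → ℝ} {f' a : ℝ}
    (hf : HasDerivWithinAt f f' (Ioi a) a) (hle : ∀ᶠ x in 𝓝[>] a, f a ≤ f x) : 0 ≤ f' := by
  refine ge_of_tendsto ((hasDerivWithinAt_iff_tendsto_slope' self_notMem_Ioi).1 hf) ?_
  filter_upwards [hle, eventually_mem_nhdsWithin] with x hx hax
  exact smul_nonneg (inv_nonneg.2 (sub_nonneg.2 (le_of_lt hax))) (sub_nonneg.2 hx)

section Prudence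

/-- The central difference of `φ` at `m` with step `s`, not divided by `2 * s`. -/
def centralDiff (φ : ℝ → ℝ) (m s : ℝ) : ℝ := φ (m + s) - φ (m - s)

/-- Prudence of a utility index `φ`: the scalar form of ambiguity prudence, in terms of the centre
`m = u₂`, the gap `d = u₂ - u₁ = u₃ - u₂` and the reshuffled amount `h = ū`. -/
def IsPrudent (φ : ℝ → ℝ) : Prop :=
  ∀ m d h : ℝ, 0 < h → 3 * h < d →
    φ (m - d - h) + φ (m + 2 * h) + φ (m + d - h) ≤
      φ (m - d + h) + φ (m - 2 * h) + φ (m + d + h)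

variable {φ : ℝ → ℝ}

theorem isPrudent_iff_centralDiff :
    IsPrudent φ ↔ ∀ m d h : ℝ, 0 < h → 3 * h < d →
      centralDiff φ m (2 * h) + centralDiff φ m (d - h) ≤ centralDiff φ m (d + h) := by
  refine forall₅_congr fun m d h _ _ => ?_
  simp only [centralDiff, ← add_sub_assoc, ← add_assoc, ← sub_sub, sub_add]
  constructor <;> intro <;> linarith

theorem centralDiff_zero (m : ℝ) : centralDiff φ m 0 = 0 := by
  simp only [centralDiff, add_zero, sub_zero, sub_self]

theorem hasDerivAt_centralDiff (hφ : Differentiable ℝ φ) (m s : ℝ) :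
    HasDerivAt (centralDiff φ m) (deriv φ (m + s) + deriv φ (m - s)) s := by
  rw [← sub_neg_eq_add]
  exact ((hφ (m + s)).hasDerivAt.comp_const_add m s).sub
    ((hφ (m - s)).hasDerivAt.comp_const_sub m s)

theorem convexOn_centralDiff (hφ : Differentiable ℝ φ) (hconv : ConvexOn ℝ univ (deriv φ))
    (m : ℝ) : ConvexOn ℝ (Ici 0) (centralDiff φ m) := by
  have hderiv := hasDerivAt_centralDiff hφ m
  have hdiff : Differentiable ℝ (centralDiff φ m) := fun s => (hderiv s).differentiableAt
  refine MonotoneOn.convexOn_of_deriv (convex_Ici 0) hdiff.continuous.continuousOn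
    hdiff.differentiableOn fun s hs t _ hst => ?_
  rw [interior_Ici, mem_Ioi] at hs
  have hmem : m + s ∈ segment ℝ (m - t) (m + t) := by
    rw [segment_eq_Icc (by linarith)]
    exact ⟨by linarith, by linarith⟩
  rw [(hderiv s).deriv, (hderiv t).deriv, add_comm (deriv φ (m + t))]
  exact map_add_map_le_of_convexOn_of_mem_segment hconv (mem_univ _) (mem_univ _) hmem (by ring)

theorem IsPrudent.two_mul_deriv_le (h : IsPrudent φ) (hφ : Differentiable ℝ φ) (m : ℝ) {d : ℝ}
    (hd : 0 < d) : 2 * deriv φ m ≤ deriv φ (m + d) + deriv φ (m - d) := by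
  have hderiv := hasDerivAt_centralDiff hφ m
  let gain : ℝ → ℝ := fun t =>
    centralDiff φ m (d + t) - centralDiff φ m (d - t) - centralDiff φ m (2 * t)
  have hgain_zero : gain 0 = 0 := by
    simp only [gain, add_zero, sub_zero, mul_zero, centralDiff_zero, sub_self]
  have hgain_nonneg : ∀ᶠ t in 𝓝[>] 0, gain 0 ≤ gain t := by
    filter_upwards [Ioo_mem_nhdsGT (show (0 : ℝ) < d / 3 by positivity)] with t ht
    have := isPrudent_iff_centralDiff.1 h m d t ht.1 (by linarith [ht.2])
    rw [hgain_zero]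
    simp only [gain]
    linarith
  have hgain_deriv :
      HasDerivAt gain (2 * (deriv φ (m + d) + deriv φ (m - d)) - 4 * deriv φ m) 0 := by
    convert! (((hderiv (d + 0)).comp_const_add d 0).sub
      ((hderiv (d - 0)).comp_const_sub d 0)).sub
      ((hderiv (2 * 0)).comp (0 : ℝ) ((hasDerivAt_id (0 : ℝ)).const_mul 2)) using 1
    simp only [add_zero, sub_zero, mul_zero]
    ring
  linarith [nonneg_of_hasDerivWithinAt_Ioi_of_eventually_le hgain_deriv.hasDerivWithinAt
    hgain_nonneg]

theorem IsPrudent.isMidpointConvex_deriv (h : IsPrudent φ) (hφ : Differentiable ℝ φ) :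
    IsMidpointConvex (deriv φ) := by
  intro m d
  rcases lt_trichotomy d 0 with hd | rfl | hd
  · simpa only [sub_neg_eq_add, ← sub_eq_add_neg, add_comm] using
      h.two_mul_deriv_le hφ m (neg_pos.2 hd)
  · rw [add_zero, sub_zero, two_mul]
  · exact h.two_mul_deriv_le hφ m hd

theorem isPrudent_of_convexOn_deriv (hφ : Differentiable ℝ φ)
    (hconv : ConvexOn ℝ univ (deriv φ)) : IsPrudent φ := by
  refine isPrudent_iff_centralDiff.2 fun m d h hh hd => ?_
  have hmem : 2 * h ∈ segment ℝ 0 (d + h) := by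
    rw [segment_eq_Icc (by linarith)]
    exact ⟨by linarith, by linarith⟩
  simpa only [centralDiff_zero, zero_add] using
    map_add_map_le_of_convexOn_of_mem_segment (convexOn_centralDiff hφ hconv m)
      self_mem_Ici (mem_Ici.2 (by linarith)) hmem (y := d - h) (by ring)

theorem isPrudent_iff_convexOn_deriv (hφ : Differentiable ℝ φ) :
    IsPrudent φ ↔ ConvexOn ℝ univ (deriv φ) :=
  ⟨fun h => convexOn_univ_deriv_of_isMidpointConvex hφ (h.isMidpointConvex_deriv hφ),
    isPrudent_of_convexOn_deriv hφ⟩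

end Prudence

section StateSums

theorem sum_comp_update₃ {ι α M : Type*} [Fintype ι] [DecidableEq ι] [AddCommMonoid M]
    (φ : α → M) (y : ι → α) {i j l : ι} (hij : i ≠ j) (hil : i ≠ l) (hjl : j ≠ l) (a b c : α) :
    ∑ n, φ (update (update (update y i a) j b) l c n) =
      φ a + φ b + φ c + ∑ n ∈ ((Finset.univ \ {l}) \ {j}) \ {i}, φ (y n) := by
  have hj : j ∈ Finset.univ \ {l} := by simpa using hjl
  have hi : i ∈ (Finset.univ \ {l}) \ {j} := by simpa using ⟨hil, hij⟩
  simp only [← comp_apply (f := φ), comp_update, Finset.sum_update_of_mem (Finset.mem_univ l),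
    Finset.sum_update_of_mem hj, Finset.sum_update_of_mem hi]
  abel

theorem ambiguityPrudent_mul_sum_of_isPrudent (k : ℕ) {φ : ℝ → ℝ} {c : ℝ} (hc : 0 ≤ c)
    (h : IsPrudent φ) : AmbiguityPrudent (fun y : Fin k → ℝ => c * ∑ i, φ (y i)) := by
  intro E ω₁ ω₂ ω₃ u₁ u₂ u₃ ub y _ _ _ h₁₂ h₁₃ h₂₃ _ _ hgap hub hlt _ _ _ _ _
  obtain rfl : u₃ = u₂ + (u₂ - u₁) := by linarith
  refine mul_le_mul_of_nonneg_left ?_ hc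
  rw [sum_comp_update₃ φ y h₁₂ h₁₃ h₂₃, sum_comp_update₃ φ y h₁₂ h₁₃ h₂₃, add_le_add_iff_right]
  simpa only [sub_sub_cancel] using h u₂ (u₂ - u₁) ub hub hlt

theorem isPrudent_of_ambiguityPrudent_mul_sum {k : ℕ} (hk : 3 ≤ k) {φ : ℝ → ℝ} {c : ℝ}
    (hc : 0 < c) (h : AmbiguityPrudent (fun y : Fin k → ℝ => c * ∑ i, φ (y i))) :
    IsPrudent φ := by
  intro m d t ht hd
  let ω₁ : Fin k := ⟨0, by lia⟩
  let ω₂ : Fin k := ⟨1, by lia⟩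
  let ω₃ : Fin k := ⟨2, by lia⟩
  have h₁₂ : ω₁ ≠ ω₂ := by simp [ω₁, ω₂]
  have h₁₃ : ω₁ ≠ ω₃ := by simp [ω₁, ω₃]
  have h₂₃ : ω₂ ≠ ω₃ := by simp [ω₂, ω₃]
  let y : Fin k → ℝ := fun ω => m - d + ω * d
  have hy₁ : y ω₁ = m - d := by simp [y, ω₁]
  have hy₂ : y ω₂ = m := by simp [y, ω₂]
  have hy₃ : y ω₃ = m + d := by simp only [y, ω₃, Nat.cast_ofNat]; ring
  have hy_large (ω : Fin k) (n₁ : ω ≠ ω₁) (n₂ : ω ≠ ω₂) (n₃ : ω ≠ ω₃) : m + d + t < y ω := by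
    have hω : 3 ≤ (ω : ℕ) := by
      simp only [ne_eq, Fin.ext_iff, ω₁, ω₂, ω₃] at n₁ n₂ n₃
      lia
    have hωd : 3 * d ≤ (ω : ℝ) * d :=
      mul_le_mul_of_nonneg_right (by exact_mod_cast hω) (by linarith)
    simp only [y]
    linarith
  have hU := h ∅ ω₁ ω₂ ω₃ (m - d) m (m + d) t y (Finset.notMem_empty _) (Finset.notMem_empty _)
    (Finset.notMem_empty _) h₁₂ h₁₃ h₂₃ (by linarith) (by linarith) (by ring) ht (by linarith)
    hy₁ hy₂ hy₃ (by simp only [Finset.notMem_empty, false_imp_iff, implies_true])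
    fun ω _ => hy_large ω
  have hsum := le_of_mul_le_mul_left hU hc
  rwa [sum_comp_update₃ φ y h₁₂ h₁₃ h₂₃, sum_comp_update₃ φ y h₁₂ h₁₃ h₂₃,
    add_le_add_iff_right] at hsum

theorem ambiguityPrudent_mul_sum_iff_isPrudent {k : ℕ} (hk : 3 ≤ k) {φ : ℝ → ℝ} {c : ℝ}
    (hc : 0 < c) :
    AmbiguityPrudent (fun y : Fin k → ℝ => c * ∑ i, φ (y i)) ↔ IsPrudent φ :=
  ⟨isPrudent_of_ambiguityPrudent_mul_sum hk hc, ambiguityPrudent_mul_sum_of_isPrudent k hc.le⟩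

end StateSums

/-- For k ≥ 3 and three times differentiable φ : ℝ → ℝ, the SOEU functional
U(y) = (1/k)∑ᵢ φ(yᵢ) is ambiguity prudent iff φ''' ≥ 0 everywhere. -/
theorem SOEU_ambiguityPrudent_iff_third_deriv_nonneg
    {k : ℕ} (hk : 3 ≤ k)
    (φ : ℝ → ℝ)
    (hd1 : Differentiable ℝ φ)
    (hd2 : Differentiable ℝ (deriv φ))
    (hd3 : Differentiable ℝ (deriv (deriv φ))) :
    AmbiguityPrudent (fun y : Fin k → ℝ => (1 / (k : ℝ)) * ∑ i, φ (y i)) ↔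
    (∀ t : ℝ, 0 ≤ deriv (deriv (deriv φ)) t) := by
  have hweight : 0 < 1 / (k : ℝ) := one_div_pos.2 (Nat.cast_pos.2 (by lia))
  rw [ambiguityPrudent_mul_sum_iff_isPrudent hk hweight, isPrudent_iff_convexOn_deriv hd1]
  exact convexOn_univ_iff_deriv2_nonneg hd2 hd3
end
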